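/- Let g be a symmetric positive definite real d×d matrix, J any real d×d matrix, 𝐁 = g⁻¹(Jᵀ − J), Φ((Q,P),(Q',P')) = 2⟨g⁻¹(P − JQ), P' − JQ'⟩ on ℝ^d × ℝ^d, and ω₀((Q,P),(Q',P')) = ⟨P',Q⟩ − ⟨P,Q'⟩. Then for every (Q,P) ∈ ℝ^d × ℝ^d the following are equivalent: (a) Φ((Q,P),(Q', JᵀQ')) = 0 for all Q' ∈ ℝ^d; (b) ω₀((Q,P),(𝐁Q', Jᵀ𝐁Q')) = 0 for all Q' ∈ ℝ^d. In other words, the Φ-orthogonal of the graph of Jᵀ equals the ω₀-orthogonal of the subspace F = {(𝐁Q', Jᵀ𝐁Q') : Q' ∈ ℝ^d}. -/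

import Mathlib

open Matrix

noncomputable section

/-- The standard symplectic form on `ℝ^d × ℝ^d`:
`ω₀((Q,P),(Q',P')) = ⟨P',Q⟩ − ⟨P,Q'⟩`. -/
def omega0 {d : ℕ} (p p' : (Fin d → ℝ) × (Fin d → ℝ)) : ℝ :=
  p'.2 ⬝ᵥ p.1 - p.2 ⬝ᵥ p'.1

/-- The Hessian bilinear form of the magnetic Hamiltonian at a point of its zero set:
`Φ((Q,P),(Q',P')) = 2⟨g⁻¹(P − JQ), P' − JQ'⟩`. -/
def hessH {d : ℕ} (g J : Matrix (Fin d) (Fin d) ℝ)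
    (p p' : (Fin d → ℝ) × (Fin d → ℝ)) : ℝ :=
  2 * ((g⁻¹ *ᵥ (p.2 - J *ᵥ p.1)) ⬝ᵥ (p'.2 - J *ᵥ p'.1))

/-!
Against vectors of the graph of `Jᵀ`, both forms see `(Q, P)` only through `P - J Q`, its deviation
from the graph of `J`: there `ω₀` restricts to `-⟨P - J Q, ·⟩`, and in `Φ` the factor `g⁻¹` cancels
against `g` in `(Jᵀ - J) Q' = g 𝐁 Q'`, leaving twice the pairing `⟨P - J Q, 𝐁 Q'⟩`.
-/

theorem inv_mulVec_dotProduct_transpose_mulVec {n R : Type*} [Fintype n] [DecidableEq n]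
    [CommRing R] {A : Matrix n n R} (hA : IsUnit A.det) (v w : n → R) :
    (A⁻¹ *ᵥ v) ⬝ᵥ (Aᵀ *ᵥ w) = v ⬝ᵥ w := by
  rw [dotProduct_mulVec, vecMul_transpose, mulVec_mulVec, mul_nonsing_inv A hA, one_mulVec]

section

variable {d : ℕ} {g : Matrix (Fin d) (Fin d) ℝ} (J : Matrix (Fin d) (Fin d) ℝ)
  (p : (Fin d → ℝ) × (Fin d → ℝ))

theorem omega0_graph_transpose (v : Fin d → ℝ) :
    omega0 p (v, Jᵀ *ᵥ v) = -((p.2 - J *ᵥ p.1) ⬝ᵥ v) := by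
  have transpose_adjoint : (Jᵀ *ᵥ v) ⬝ᵥ p.1 = (J *ᵥ p.1) ⬝ᵥ v := by
    rw [mulVec_transpose, ← dotProduct_mulVec, dotProduct_comm]
  rw [omega0, transpose_adjoint, sub_dotProduct, neg_sub]

variable {J} in
theorem hessH_eq_of_sub_eq_mulVec (hgs : g.IsSymm) (hg : IsUnit g.det)
    {p' : (Fin d → ℝ) × (Fin d → ℝ)} {v : Fin d → ℝ} (hv : p'.2 - J *ᵥ p'.1 = g *ᵥ v) :
    hessH g J p p' = 2 * ((p.2 - J *ᵥ p.1) ⬝ᵥ v) := by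
  rw [hessH, hv, ← inv_mulVec_dotProduct_transpose_mulVec hg _ v, hgs.eq]

theorem hessH_graph_transpose_eq_neg_two_mul_omega0 (hgs : g.IsSymm) (hg : IsUnit g.det)
    (Q' : Fin d → ℝ) :
    hessH g J p (Q', Jᵀ *ᵥ Q') =
      -2 * omega0 p ((g⁻¹ * (Jᵀ - J)) *ᵥ Q', Jᵀ *ᵥ ((g⁻¹ * (Jᵀ - J)) *ᵥ Q')) := by
  have sub_eq_mulVec : Jᵀ *ᵥ Q' - J *ᵥ Q' = g *ᵥ ((g⁻¹ * (Jᵀ - J)) *ᵥ Q') := by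
    rw [mulVec_mulVec, mul_nonsing_inv_cancel_left _ _ hg, sub_mulVec]
  rw [hessH_eq_of_sub_eq_mulVec p hgs hg sub_eq_mulVec, omega0_graph_transpose, neg_mul_neg]

end

theorem hessian_orthogonal_eq_symplectic_orthogonal_general {d : ℕ}
    (g J : Matrix (Fin d) (Fin d) ℝ)
    (hgs : g.IsSymm) (hg : IsUnit g.det) :
    ∀ Q P : Fin d → ℝ,
      (∀ Q' : Fin d → ℝ, hessH g J (Q, P) (Q', Jᵀ *ᵥ Q') = 0) ↔
      (∀ Q' : Fin d → ℝ,
        omega0 (Q, P)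
          ((g⁻¹ * (Jᵀ - J)) *ᵥ Q', Jᵀ *ᵥ ((g⁻¹ * (Jᵀ - J)) *ᵥ Q')) = 0) := by
  intro Q P
  refine forall_congr' fun Q' => ?_
  rw [hessH_graph_transpose_eq_neg_two_mul_omega0 J (Q, P) hgs hg,
    mul_eq_zero_iff_left (by norm_num)]

/-- The `Φ`-orthogonal of the graph of `Jᵀ` equals the `ω₀`-orthogonal of the
subspace `F = {(𝐁Q', Jᵀ𝐁Q')}`, where `𝐁 = g⁻¹(Jᵀ − J)`. -/
theorem hessian_orthogonal_eq_symplectic_orthogonal {d : ℕ}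
    (g J : Matrix (Fin d) (Fin d) ℝ)
    (hgs : g.IsSymm) (hgpd : g.PosDef) :
    ∀ Q P : Fin d → ℝ,
      (∀ Q' : Fin d → ℝ, hessH g J (Q, P) (Q', Jᵀ *ᵥ Q') = 0) ↔
      (∀ Q' : Fin d → ℝ,
        omega0 (Q, P)
          ((g⁻¹ * (Jᵀ - J)) *ᵥ Q', Jᵀ *ᵥ ((g⁻¹ * (Jᵀ - J)) *ᵥ Q')) = 0) :=
  hessian_orthogonal_eq_symplectic_orthogonal_general g J hgs hgpd.det_pos.ne'.isUnit
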